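/- Every element g of the subgroup G = ⟨a, b⟩ is uniquely expressible in the form g = aᵐ · ∏_{k∈ℤ} a⁻ᵏb^{mₖ}aᵏ, where m ∈ ℤ and (mₖ)_{k∈ℤ} is a finitely supported family of integers; that is, if aᵐ ∏ₖ a⁻ᵏb^{mₖ}aᵏ = a^{m'} ∏ₖ a⁻ᵏb^{m'ₖ}aᵏ then m = m' and mₖ = m'ₖ for all k. -/

import Mathlib

/-!
The permutation `b` moves only points of the open interval `(1/2, 7/8)`, and `a (1/2) = 7/8`, so
`a` pushes `[1/2, ∞)` into `[7/8, ∞)` and `a⁻¹` pushes `(-∞, 7/8]` into `(-∞, 1/2]`. Hence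
`b` fixes every point of `a ^ n • [1/2, 7/8]` with `n ≠ 0` (`b_fix_translate`): the conjugates
`c k = a ^ k * b * a ^ (-k)` have pairwise disjoint supports, so they commute (`c_commute`) and
`single k 1 ↦ c k` extends to a homomorphism `φ`.

*Existence.* Conjugation by `a ^ n` sends `c k` to `c (k + n)`, so `a ^ n` normalises the range of
`φ` (`shift`) and the elements `φ m * a ^ n` form a subgroup, which contains `a` and `b = c 0`.

*Uniqueness.* It suffices that `φ m * a ^ n = 1` forces `n = 0` and `m = 0` (`phi_mul_a_eq_one`).
Every `c k` fixes `1/2`, so `a ^ n` fixes `1/2` as well, which forces `n = 0`. At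
`a ^ k (3/4)` only `c k` acts (`phi_apply`), and `3/4` has an infinite orbit under `b`, so
`m k = 0`.
-/

noncomputable section
set_option maxHeartbeats 2000000


/-- The underlying function of Thompson's generator `x₀`, extended by the
identity outside `[0,1]`. -/
def x0fun : ℝ → ℝ := fun α =>
  if α < 0 then α
  else if α ≤ 1/4 then 2*α
  else if α ≤ 1/2 then α + 1/4
  else if α ≤ 1 then α/2 + 1/2
  else α

/-- The inverse of `x0fun`. -/
def x0inv : ℝ → ℝ := fun α =>
  if α < 0 then α
  else if α ≤ 1/2 then α/2
  else if α ≤ 3/4 then α - 1/4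
  else if α ≤ 1 then 2*α - 1
  else α

/-- Thompson's generator `x₀`, as a permutation of `ℝ` which is the identity
outside `[0,1]`:  `x₀ α = 2α` on `[0,1/4]`, `α + 1/4` on `[1/4,1/2]`,
`α/2 + 1/2` on `[1/2,1]`. -/
def x₀ : Equiv.Perm ℝ where
  toFun := x0fun
  invFun := x0inv
  left_inv := by
    intro x
    simp only [x0fun, x0inv]
    split_ifs <;> linarith
  right_inv := by
    intro x
    simp only [x0fun, x0inv]
    split_ifs <;> linarith

/-- The underlying function of Thompson's generator `x₁`, extended by the
identity outside `[0,1]`. -/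
def x1fun : ℝ → ℝ := fun α =>
  if α ≤ 1/2 then α
  else if α ≤ 5/8 then 2*α - 1/2
  else if α ≤ 3/4 then α + 1/8
  else if α ≤ 1 then α/2 + 1/2
  else α

/-- The inverse of `x1fun`. -/
def x1inv : ℝ → ℝ := fun α =>
  if α ≤ 1/2 then α
  else if α ≤ 3/4 then α/2 + 1/4
  else if α ≤ 7/8 then α - 1/8
  else if α ≤ 1 then 2*α - 1
  else α

/-- Thompson's generator `x₁`, as a permutation of `ℝ` which is the identity
outside `[0,1]`:  `x₁ α = α` on `[0,1/2]`, `2α - 1/2` on `[1/2,5/8]`,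
`α + 1/8` on `[5/8,3/4]`, and on `[3/4,1]` the affine map of slope `1/2`
fixing `1` (written `α/2 + 3/4` in the source, an evident typo for
`α/2 + 1/2`, the unique slope-`1/2` affine map with `3/4 ↦ 7/8`, `1 ↦ 1`). -/
def x₁ : Equiv.Perm ℝ where
  toFun := x1fun
  invFun := x1inv
  left_inv := by
    intro x
    simp only [x1fun, x1inv]
    split_ifs <;> linarith
  right_inv := by
    intro x
    simp only [x1fun, x1inv]
    split_ifs <;> linarith

/-- `x₂ = x₀⁻¹ x₁ x₀` (maps written on the right), i.e. the map
`α ↦ x₀ (x₁ (x₀⁻¹ α))`; in terms of composition this is `x₀ * x₁ * x₀⁻¹`. -/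
def x₂ : Equiv.Perm ℝ := x₀ * x₁ * x₀⁻¹

/-- `b = x₁ x₂⁻¹` (maps written on the right), i.e. the map `α ↦ x₂⁻¹ (x₁ α)`. -/
def b : Equiv.Perm ℝ := x₂⁻¹ * x₁

/-- `a = x₀²`. -/
def a : Equiv.Perm ℝ := x₀ ^ 2

/-- The conjugate `a⁻ᵏ b aᵏ` (maps written on the right), i.e. the map
`α ↦ x₀²ᵏ (b (x₀⁻²ᵏ α))`. -/
def c (k : ℤ) : Equiv.Perm ℝ := x₀ ^ (2*k) * b * x₀ ^ (-(2*k))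

lemma x0_apply (x : ℝ) : x₀ x = x0fun x := rfl
lemma b_apply (x : ℝ) : b x = x0fun (x1inv (x0inv (x1fun x))) := rfl
lemma a_apply (x : ℝ) : a x = x0fun (x0fun x) := rfl
lemma a_inv_apply (x : ℝ) : a⁻¹ x = x0inv (x0inv x) := rfl

lemma c_eq (k : ℤ) : c k = a ^ k * b * a ^ (-k) := by
  simp only [c, a, ← zpow_natCast x₀ 2, ← zpow_mul]
  norm_num

lemma c_zero : c 0 = b := by simp [c]

lemma a_mul_c (n k : ℤ) : a ^ n * c k = c (k + n) * a ^ n := by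
  rw [c_eq, c_eq]
  group

lemma b_fix {x : ℝ} (hx : x ≤ 1 / 2 ∨ 7 / 8 ≤ x) : b x = x := by
  rw [b_apply]
  rcases hx with hx | hx
  · have h1 : x1fun x = x := by simp only [x1fun]; exact if_pos hx
    have h2 : x0inv x ≤ 1 / 2 := by simp only [x0inv]; split_ifs <;> linarith
    have h3 : x1inv (x0inv x) = x0inv x := by simp only [x1inv]; exact if_pos h2
    rw [h1, h3]
    exact x₀.right_inv x
  · by_cases hx1 : x ≤ 1
    · have h1 : x1fun x = x / 2 + 1 / 2 := by simp only [x1fun]; split_ifs <;> linarith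
      have h2 : x0inv (x / 2 + 1 / 2) = x := by simp only [x0inv]; split_ifs <;> linarith
      have h3 : x1inv x = 2 * x - 1 := by simp only [x1inv]; split_ifs <;> linarith
      rw [h1, h2, h3]
      simp only [x0fun]; split_ifs <;> linarith
    · have h1 : x1fun x = x := by simp only [x1fun]; split_ifs <;> linarith
      have h2 : x0inv x = x := by simp only [x0inv]; split_ifs <;> linarith
      have h3 : x1inv x = x := by simp only [x1inv]; split_ifs <;> linarith
      rw [h1, h2, h3]
      simp only [x0fun]; split_ifs <;> linarith

lemma b_apply_right {x : ℝ} (h : 3 / 4 ≤ x) (h' : x < 7 / 8) : b x = x / 2 + 7 / 16 := by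
  rw [b_apply]
  have h1 : x1fun x = x / 2 + 1 / 2 := by simp only [x1fun]; split_ifs <;> linarith
  have h2 : x0inv (x / 2 + 1 / 2) = x := by simp only [x0inv]; split_ifs <;> linarith
  have h3 : x1inv x = x - 1 / 8 := by simp only [x1inv]; split_ifs <;> linarith
  rw [h1, h2, h3]
  simp only [x0fun]; split_ifs <;> linarith

lemma a_ge {x : ℝ} (h : 1 / 2 ≤ x) : 7 / 8 ≤ a x := by
  rw [a_apply]
  have h1 : 3 / 4 ≤ x0fun x := by simp only [x0fun]; split_ifs <;> linarith
  generalize x0fun x = y at h1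
  simp only [x0fun]; split_ifs <;> linarith

lemma a_inv_le {x : ℝ} (h : x ≤ 7 / 8) : a⁻¹ x ≤ 1 / 2 := by
  rw [a_inv_apply]
  have h1 : x0inv x ≤ 3 / 4 := by simp only [x0inv]; split_ifs <;> linarith
  generalize x0inv x = y at h1
  simp only [x0inv]; split_ifs <;> linarith

lemma a_pow_ge {x : ℝ} (h : 1 / 2 ≤ x) (n : ℕ) : 7 / 8 ≤ (a ^ (n + 1)) x := by
  induction n with
  | zero => simpa using a_ge h
  | succ n ih =>
    rw [pow_succ', Equiv.Perm.mul_apply]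
    exact a_ge (by linarith)

lemma a_inv_pow_le {x : ℝ} (h : x ≤ 7 / 8) (n : ℕ) : (a⁻¹ ^ (n + 1)) x ≤ 1 / 2 := by
  induction n with
  | zero => simpa using a_inv_le h
  | succ n ih =>
    rw [pow_succ', Equiv.Perm.mul_apply]
    exact a_inv_le (by linarith)

lemma a_zpow_dichotomy {x : ℝ} (h : 1 / 2 ≤ x) (h' : x ≤ 7 / 8) {n : ℤ} (hn : n ≠ 0) :
    (0 < n ∧ 7 / 8 ≤ (a ^ n) x) ∨ (n < 0 ∧ (a ^ n) x ≤ 1 / 2) := by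
  rcases lt_or_gt_of_ne hn with hn | hn
  · right
    obtain ⟨m, rfl⟩ : ∃ m : ℕ, n = -((m + 1 : ℕ) : ℤ) := ⟨(-n - 1).toNat, by omega⟩
    refine ⟨hn, ?_⟩
    rw [zpow_neg, zpow_natCast, ← inv_pow]
    exact a_inv_pow_le h' m
  · left
    obtain ⟨m, rfl⟩ : ∃ m : ℕ, n = ((m + 1 : ℕ) : ℤ) := ⟨(n - 1).toNat, by omega⟩
    refine ⟨hn, ?_⟩
    rw [zpow_natCast]
    exact a_pow_ge h m

/-- The support of `b` is disjoint from the nontrivial `a`-translates of `[1/2, 7/8]`. -/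
lemma b_fix_translate {x : ℝ} (h : 1 / 2 ≤ x) (h' : x ≤ 7 / 8) {n : ℤ} (hn : n ≠ 0) :
    b ((a ^ n) x) = (a ^ n) x := by
  apply b_fix
  rcases a_zpow_dichotomy h h' hn with h | h
  · exact Or.inr h.2
  · exact Or.inl h.2

lemma c_fix_translate {x : ℝ} (h : 1 / 2 ≤ x) (h' : x ≤ 7 / 8) {j k : ℤ} (hjk : j ≠ k) :
    c j ((a ^ k) x) = (a ^ k) x := by
  rw [c_eq, Equiv.Perm.mul_apply, Equiv.Perm.mul_apply, ← Equiv.Perm.mul_apply (a ^ (-j)),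
    ← zpow_add, b_fix_translate h h' (by omega), ← Equiv.Perm.mul_apply, ← zpow_add]
  congr 2
  ring

lemma b_commute_c {n : ℤ} (hn : n ≠ 0) : Commute b (c n) := by
  apply Equiv.Perm.Disjoint.commute
  intro x
  by_cases hx : x ≤ 1 / 2 ∨ 7 / 8 ≤ x
  · exact Or.inl (b_fix hx)
  · push Not at hx
    exact Or.inr (by simpa using c_fix_translate hx.1.le hx.2.le hn)

lemma c_commute (j k : ℤ) : Commute (c j) (c k) := by
  by_cases hjk : j = k
  · rw [hjk]
  -- conjugating `b` and `c (k - j)` by `a ^ j` gives `c j` and `c k`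
  · have h := (b_commute_c (n := k - j) (by omega)).eq
    rw [c_eq] at h
    have e1 : c j * c k = a ^ j * (b * (a ^ (k - j) * b * a ^ (-(k - j)))) * a ^ (-j) := by
      rw [c_eq, c_eq]; group
    have e2 : c k * c j = a ^ j * ((a ^ (k - j) * b * a ^ (-(k - j))) * b) * a ^ (-j) := by
      rw [c_eq, c_eq]; group
    rw [commute_iff_eq, e1, e2, h]

/-- The forward orbit of `3/4` under `b` stays in `(3/4, 7/8)`, so it never returns to `3/4`:
there `b` moves each point halfway towards its fixed point `7/8`. -/
lemma b_pow_mem (n : ℕ) :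
    3 / 4 < (b ^ (n + 1)) (3 / 4 : ℝ) ∧ (b ^ (n + 1)) (3 / 4 : ℝ) < 7 / 8 := by
  induction n with
  | zero =>
    rw [zero_add, pow_one, b_apply_right le_rfl (by norm_num)]
    norm_num
  | succ n ih =>
    rw [pow_succ', Equiv.Perm.mul_apply, b_apply_right ih.1.le ih.2]
    constructor <;> linarith [ih.1, ih.2]

lemma b_zpow_eq_zero {n : ℤ} (h : (b ^ n) (3 / 4 : ℝ) = 3 / 4) : n = 0 := by
  have key : ∀ m : ℕ, (b ^ ((m + 1 : ℕ) : ℤ)) (3 / 4 : ℝ) ≠ 3 / 4 := fun m => by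
    rw [zpow_natCast]
    exact (b_pow_mem m).1.ne'
  by_contra hn
  rcases lt_or_gt_of_ne hn with hn | hn
  · have h2 : (b ^ (-n)) (3 / 4 : ℝ) = 3 / 4 := by
      rw [zpow_neg, Equiv.Perm.inv_eq_iff_eq, h]
    apply key (-n - 1).toNat
    rwa [show (((-n - 1).toNat + 1 : ℕ) : ℤ) = -n by omega]
  · apply key (n - 1).toNat
    rwa [show (((n - 1).toNat + 1 : ℕ) : ℤ) = n by omega]

lemma a_zpow_eq_zero {n : ℤ} (h : (a ^ n) (1 / 2 : ℝ) = 1 / 2) : n = 0 := by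
  have key : ∀ m : ℤ, 0 < m → (a ^ m) (1 / 2 : ℝ) ≠ 1 / 2 := fun m hm h => by
    rcases a_zpow_dichotomy le_rfl (by norm_num) hm.ne' with h1 | h1
    · rw [h] at h1
      norm_num at h1
    · omega
  by_contra hn
  rcases lt_or_gt_of_ne hn with hn | hn
  · exact key (-n) (by omega) (by rw [zpow_neg, Equiv.Perm.inv_eq_iff_eq, h])
  · exact key n hn h

/-- The commuting family `c` extends to a homomorphism from the free abelian group; it is obtained
from the universal property in the commutative subgroup generated by the `c k`. -/
lemma exists_phi : ∃ φ : Multiplicative (ℤ →₀ ℤ) →* Equiv.Perm ℝ,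
    ∀ k : ℤ, φ (Multiplicative.ofAdd (Finsupp.single k 1)) = c k := by
  let H := Subgroup.closure (Set.range c)
  have : IsMulCommutative H := Subgroup.isMulCommutative_closure (k := Set.range c) (by
    rintro _ ⟨j, rfl⟩ _ ⟨k, rfl⟩
    exact (c_commute j k).eq)
  let : CommGroup H := { (inferInstance : Group H) with mul_comm := mul_comm' }
  let d : ℤ → H := fun k => ⟨c k, Subgroup.subset_closure ⟨k, rfl⟩⟩
  let ψ : (ℤ →₀ ℤ) →+ Additive H :=
    Finsupp.liftAddHom fun k => (zmultiplesHom (Additive H)) (Additive.ofMul (d k))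
  refine ⟨H.subtype.comp (AddMonoidHom.toMultiplicativeLeft ψ), fun k => ?_⟩
  simp [ψ, d]

lemma phi_single {φ : Multiplicative (ℤ →₀ ℤ) →* Equiv.Perm ℝ}
    (hφ : ∀ k : ℤ, φ (Multiplicative.ofAdd (Finsupp.single k 1)) = c k)
    (k z : ℤ) : φ (Multiplicative.ofAdd (Finsupp.single k z)) = c k ^ z := by
  rw [← hφ, ← map_zpow, ← ofAdd_zsmul]
  simp

lemma shift {φ : Multiplicative (ℤ →₀ ℤ) →* Equiv.Perm ℝ}
    (hφ : ∀ k : ℤ, φ (Multiplicative.ofAdd (Finsupp.single k 1)) = c k)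
    (n : ℤ) (m : ℤ →₀ ℤ) :
    a ^ n * φ (Multiplicative.ofAdd m) =
      φ (Multiplicative.ofAdd (m.mapDomain (· + n))) * a ^ n := by
  induction m using Finsupp.induction_linear with
  | zero => simp
  | add f g hf hg =>
    rw [Finsupp.mapDomain_add, ofAdd_add, ofAdd_add, map_mul, map_mul, ← mul_assoc, hf, mul_assoc,
      hg, mul_assoc]
  | single k z =>
    rw [Finsupp.mapDomain_single, phi_single hφ, phi_single hφ]
    exact (SemiconjBy.zpow_right (a_mul_c n k) z)

/-- At a point fixed by all `c j` with `j ≠ k`, the product `φ m` acts as its `k`-th factor. -/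
lemma phi_apply {φ : Multiplicative (ℤ →₀ ℤ) →* Equiv.Perm ℝ}
    (hφ : ∀ k : ℤ, φ (Multiplicative.ofAdd (Finsupp.single k 1)) = c k)
    {k : ℤ} {x : ℝ} (hx : ∀ j, j ≠ k → c j x = x) (m : ℤ →₀ ℤ) :
    φ (Multiplicative.ofAdd m) x = (c k ^ m k) x := by
  induction m using Finsupp.induction_linear with
  | zero => simp
  | add f g hf hg =>
    -- commutativity of the source moves `φ f` past `c k ^ g k = φ (single k (g k))`
    rw [ofAdd_add, map_mul, Equiv.Perm.mul_apply, hg, ← phi_single hφ, ← Equiv.Perm.mul_apply,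
      ← map_mul, mul_comm, map_mul, Equiv.Perm.mul_apply, hf, phi_single hφ,
      ← Equiv.Perm.mul_apply, ← zpow_add, Finsupp.add_apply, add_comm]
  | single j z =>
    rw [phi_single hφ]
    by_cases hj : j = k
    · subst hj
      simp
    · rw [Finsupp.single_eq_of_ne' hj, zpow_zero, Equiv.Perm.one_apply]
      exact Equiv.Perm.zpow_apply_eq_self_of_apply_eq_self (hx j hj) z

lemma phi_half {φ : Multiplicative (ℤ →₀ ℤ) →* Equiv.Perm ℝ}
    (hφ : ∀ k : ℤ, φ (Multiplicative.ofAdd (Finsupp.single k 1)) = c k)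
    (m : ℤ →₀ ℤ) : φ (Multiplicative.ofAdd m) (1 / 2 : ℝ) = 1 / 2 := by
  have h : ∀ j, c j (1 / 2 : ℝ) = 1 / 2 := fun j => by
    by_cases hj : j = 0
    · rw [hj, c_zero, b_fix (Or.inl le_rfl)]
    · simpa using c_fix_translate (x := 1 / 2) le_rfl (by norm_num) hj
  rw [phi_apply hφ (k := 0) fun j _ => h j]
  exact Equiv.Perm.zpow_apply_eq_self_of_apply_eq_self (h 0) _

lemma phi_mul_a_eq_one {φ : Multiplicative (ℤ →₀ ℤ) →* Equiv.Perm ℝ}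
    (hφ : ∀ k : ℤ, φ (Multiplicative.ofAdd (Finsupp.single k 1)) = c k)
    {m : ℤ →₀ ℤ} {n : ℤ} (h : φ (Multiplicative.ofAdd m) * a ^ n = 1) :
    n = 0 ∧ m = 0 := by
  have hn : n = 0 := by
    have h1 : (a ^ (-n)) = φ (Multiplicative.ofAdd m) := by
      rw [zpow_neg]; exact (eq_inv_of_mul_eq_one_left h).symm
    have h2 := a_zpow_eq_zero (n := -n) (by rw [h1, phi_half hφ])
    omega
  refine ⟨hn, ?_⟩
  rw [hn, zpow_zero, mul_one] at h
  ext k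
  have h1 := phi_apply hφ (k := k) (x := (a ^ k) (3 / 4))
    (fun j hj => c_fix_translate (by norm_num) (by norm_num) hj) m
  rw [h, Equiv.Perm.one_apply, ← Equiv.Perm.mul_apply,
    show c k ^ m k * a ^ k = a ^ k * b ^ m k from by
      have := SemiconjBy.zpow_right (a_mul_c k 0) (m k)
      rw [c_zero, zero_add] at this
      exact this.symm,
    Equiv.Perm.mul_apply] at h1
  exact b_zpow_eq_zero ((a ^ k).injective h1).symm

lemma exists_form {φ : Multiplicative (ℤ →₀ ℤ) →* Equiv.Perm ℝ}
    (hφ : ∀ k : ℤ, φ (Multiplicative.ofAdd (Finsupp.single k 1)) = c k)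
    {g : Equiv.Perm ℝ} (hg : g ∈ Subgroup.closure ({a, b} : Set (Equiv.Perm ℝ))) :
    ∃ (n : ℤ) (m : ℤ →₀ ℤ), g = φ (Multiplicative.ofAdd m) * a ^ n := by
  induction hg using Subgroup.closure_induction with
  | mem x hx =>
    rcases hx with rfl | rfl
    · exact ⟨1, 0, by simp⟩
    · exact ⟨0, Finsupp.single 0 1, by rw [hφ, c_zero]; simp⟩
  | one => exact ⟨0, 0, by simp⟩
  | mul x y _ _ hx hy =>
    obtain ⟨n, m, rfl⟩ := hx
    obtain ⟨n', m', rfl⟩ := hy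
    refine ⟨n + n', m + m'.mapDomain (· + n), ?_⟩
    rw [ofAdd_add, map_mul, zpow_add, mul_assoc, ← mul_assoc (a ^ n), shift hφ]
    simp only [mul_assoc]
  | inv x _ hx =>
    obtain ⟨n, m, rfl⟩ := hx
    refine ⟨-n, (-m).mapDomain (· + -n), ?_⟩
    rw [← shift hφ, mul_inv_rev, ofAdd_neg, map_inv, zpow_neg]

/-- every element `g` of `G = ⟨a, b⟩` is uniquely of the form
`g = aᵐ · ∏_{k∈ℤ} a⁻ᵏ b^{mₖ} aᵏ` with `m ∈ ℤ` and `(mₖ)` a finitely supported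
family of integers.  (With maps written on the right, the word `aᵐ · P` is
the function `P ∘ aᵐ`, i.e. `P * aᵐ` in Lean's composition convention.)
The product `P = ∏_{k∈ℤ} (a⁻ᵏbaᵏ)^{mₖ}` is expressed as
`φ (ofAdd m)` for the homomorphism `φ` from `⨁_{k∈ℤ} ℤ` determined by sending
the `k`-th coordinate generator to `a⁻ᵏbaᵏ`. -/
theorem normal_form :
    ∃ φ : Multiplicative (ℤ →₀ ℤ) →* Equiv.Perm ℝ,
      (∀ k : ℤ, φ (Multiplicative.ofAdd (Finsupp.single k 1)) = c k) ∧
      ∀ g ∈ Subgroup.closure ({a, b} : Set (Equiv.Perm ℝ)),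
        ∃! p : ℤ × (ℤ →₀ ℤ), g = φ (Multiplicative.ofAdd p.2) * a ^ p.1 := by
  obtain ⟨φ, hφ⟩ := exists_phi
  refine ⟨φ, hφ, fun g hg => ?_⟩
  obtain ⟨n, m, rfl⟩ := exists_form hφ hg
  refine ⟨(n, m), rfl, ?_⟩
  rintro ⟨n', m'⟩ h
  have h : φ (Multiplicative.ofAdd m) * a ^ n = φ (Multiplicative.ofAdd m') * a ^ n' := h
  have h1 : φ (Multiplicative.ofAdd (-m' + m)) * a ^ (n - n') = 1 := by
    rw [ofAdd_add, ofAdd_neg, map_mul, map_inv, zpow_sub, mul_assoc, ← mul_assoc _ (a ^ n), h]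
    group
  obtain ⟨hn, hm⟩ := phi_mul_a_eq_one hφ h1
  rw [Prod.mk.injEq]
  exact ⟨by omega, (neg_add_eq_zero.mp hm)⟩
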